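/- For each λ > 0 let ê λ : Fin 4 → ℝ⁴ be a basis of ℝ⁴ with dual basis (ê λ)* : Fin 4 → ℝ⁴ (so Σ_a ((ê λ)* i) a * (ê λ j) a = if i = j then 1 else 0), and let f : Fin 4 → ℝ⁴ be a basis with dual basis f*. Then the following are equivalent as λ → 0⁺: (A) (ê λ)* 0 → f* 0 and λ^{-1/2} • (ê λ)* i → f* i for i = 1, 2, 3; (B) ê λ 0 → f 0 and √λ • ê λ i → f i for i = 1, 2, 3. That is, the convergence conditions on the cotetrad imply those on the tetrad and vice versa. -/

import Mathlib

noncomputable section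

open Filter Topology

/-- ℝ⁴, modelled as `Fin 4 → ℝ`. -/
abbrev E4 : Type := Fin 4 → ℝ

/-- `bs` is the dual basis of the basis `b` of ℝ⁴. -/
def IsDualBasis (b bs : Fin 4 → E4) : Prop :=
  ∀ i j : Fin 4, (∑ a, bs i a * b j a) = if i = j then 1 else 0

theorem IsDualBasis.symm' {b bs : Fin 4 → E4} (h : IsDualBasis b bs) : IsDualBasis bs b := by
  intro i j
  have := h j i
  simp only [mul_comm, eq_comm] at this ⊢
  exact this

theorem IsDualBasis.mul_eq {b bs : Fin 4 → E4} (h : IsDualBasis b bs) :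
    (Matrix.of bs) * (Matrix.of b).transpose = 1 := by
  ext i j
  rw [Matrix.mul_apply, Matrix.one_apply]
  exact h i j

theorem IsDualBasis.eq_inv {b bs : Fin 4 → E4} (h : IsDualBasis b bs) :
    Matrix.of b = ((Matrix.of bs)⁻¹).transpose := by
  rw [Matrix.inv_eq_right_inv h.mul_eq, Matrix.transpose_transpose]

theorem dual_tendsto {L : Filter ℝ} {g gs : ℝ → Fin 4 → E4} {f fs : Fin 4 → E4}
    (h : ∀ᶠ l in L, IsDualBasis (g l) (gs l)) (hf : IsDualBasis f fs)
    (ht : Tendsto gs L (𝓝 fs)) : Tendsto g L (𝓝 f) := by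
  have hdet : (Matrix.of fs).det ≠ 0 := by
    have := congrArg Matrix.det hf.mul_eq
    rw [Matrix.det_mul, Matrix.det_one] at this
    exact left_ne_zero_of_mul_eq_one this
  have hM : Tendsto (fun l => Matrix.of (gs l)) L (𝓝 (Matrix.of fs)) := ht
  have hd : Tendsto (fun l => (Matrix.of (gs l)).det) L (𝓝 (Matrix.of fs).det) :=
    ((continuous_id.matrix_det).tendsto (Matrix.of fs)).comp hM
  have ha : Tendsto (fun l => (Matrix.of (gs l)).adjugate) L (𝓝 (Matrix.of fs).adjugate) :=
    ((continuous_id.matrix_adjugate).tendsto (Matrix.of fs)).comp hM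
  have hi : Tendsto (fun l => ((Matrix.of (gs l))⁻¹).transpose) L
      (𝓝 ((Matrix.of fs)⁻¹).transpose) := by
    simp only [Matrix.inv_def, Ring.inverse_eq_inv']
    exact ((continuous_id.matrix_transpose).tendsto _).comp ((hd.inv₀ hdet).smul ha)
  rw [← hf.eq_inv] at hi
  have := hi.congr' (f₂ := fun l => Matrix.of (g l)) (h.mono fun l hl => hl.eq_inv.symm)
  exact this

/-- The scaling factor. -/
def scl (l : ℝ) (i : Fin 4) : ℝ := if i = 0 then 1 else Real.sqrt l

theorem tendsto_split {L : Filter ℝ} (u : ℝ → Fin 4 → E4) (s : ℝ → Fin 4 → ℝ) (r : ℝ → ℝ)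
    (f : Fin 4 → E4) (h0 : ∀ l, s l 0 = 1) (h1 : ∀ l i, i ≠ 0 → s l i = r l) :
    (Tendsto (fun l => u l 0) L (𝓝 (f 0)) ∧
      ∀ i : Fin 4, i ≠ 0 → Tendsto (fun l => r l • u l i) L (𝓝 (f i))) ↔
    Tendsto (fun l i => s l i • u l i) L (𝓝 f) := by
  rw [tendsto_pi_nhds (g := f)]
  constructor
  · rintro ⟨ha, hb⟩ i
    by_cases hi : i = 0
    · subst hi
      simpa only [h0, one_smul] using ha
    · simpa only [h1 _ i hi] using hb i hi
  · intro h
    refine ⟨by simpa only [h0, one_smul] using h 0, fun i hi => ?_⟩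
    simpa only [h1 _ i hi] using h i

/-- for a λ-family of bases `ê λ` with dual bases `(ê λ)*` and a basis `f`
with dual basis `f*`, the cotetrad convergence conditions
`(ê λ)* 0 → f* 0`, `λ^{-1/2} • (ê λ)* i → f* i` (i = 1,2,3) hold as λ → 0⁺ if and only
if the tetrad convergence conditions `ê λ 0 → f 0`, `√λ • ê λ i → f i` (i = 1,2,3) do. -/
theorem stmt6
    (eh ehs : ℝ → Fin 4 → E4)
    (hdualeh : ∀ l : ℝ, 0 < l → IsDualBasis (eh l) (ehs l))
    (f fs : Fin 4 → E4)
    (hdualf : IsDualBasis f fs) :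
    -- (A): convergence conditions on the cotetrad
    ((Tendsto (fun l : ℝ => ehs l 0) (nhdsWithin 0 (Set.Ioi 0)) (nhds (fs 0))) ∧
      (∀ i : Fin 4, i ≠ 0 →
        Tendsto (fun l : ℝ => (Real.sqrt l)⁻¹ • ehs l i) (nhdsWithin 0 (Set.Ioi 0))
          (nhds (fs i))))
    ↔
    -- (B): convergence conditions on the tetrad
    ((Tendsto (fun l : ℝ => eh l 0) (nhdsWithin 0 (Set.Ioi 0)) (nhds (f 0))) ∧
      (∀ i : Fin 4, i ≠ 0 →
        Tendsto (fun l : ℝ => Real.sqrt l • eh l i) (nhdsWithin 0 (Set.Ioi 0))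
          (nhds (f i)))) := by
  rw [tendsto_split ehs (fun l i => (scl l i)⁻¹) (fun l => (Real.sqrt l)⁻¹) fs
      (by simp [scl]) (by intro l i hi; simp [scl, hi]),
    tendsto_split eh scl Real.sqrt f (by simp [scl]) (by intro l i hi; simp [scl, hi])]
  have key : ∀ᶠ l in 𝓝[>] (0 : ℝ),
      IsDualBasis (fun i => scl l i • eh l i) (fun i => (scl l i)⁻¹ • ehs l i) := by
    filter_upwards [self_mem_nhdsWithin] with l hl i j
    have hl' : 0 < l := hl
    have hs : ∀ k, scl l k ≠ 0 := by
      intro k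
      unfold scl
      split_ifs
      · exact one_ne_zero
      · exact (Real.sqrt_pos.mpr hl').ne'
    have e : (∑ a, ((scl l i)⁻¹ • ehs l i) a * (scl l j • eh l j) a)
        = ((scl l i)⁻¹ * scl l j) * ∑ a, ehs l i a * eh l j a := by
      rw [Finset.mul_sum]
      refine Finset.sum_congr rfl fun a _ => ?_
      simp only [Pi.smul_apply, smul_eq_mul]
      ring
    rw [e, hdualeh l hl' i j]
    split_ifs with hij
    · subst hij
      rw [mul_one, inv_mul_cancel₀ (hs i)]
    · rw [mul_zero]
  exact ⟨dual_tendsto key hdualf,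
    dual_tendsto (key.mono fun l h => h.symm') hdualf.symm'⟩
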